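/- arXiv:math/0309264 — 2 statements merged into one kernel-verified Lean document; each statement's English description precedes it below -/
import Mathlib

section
/- Let n = 2k+1 with k ≥ 1, let c be a positive definite symmetric n×n real matrix and a an arbitrary n×n real matrix. Then there exist a symmetric n×n real matrix x, a matrix g ∈ GL(n,ℝ) with det g > 0, and a tuple λ₁ ≥ λ₂ ≥ ⋯ ≥ λ_k ≥ 0 such that Ad*(x,g)(c,a) = (1ₙ, H(λ)); moreover the tuple (λ₁,…,λ_k) with λ₁ ≥ ⋯ ≥ λ_k ≥ 0 for which (1ₙ, H(λ)) lies in the coadjoint orbit of (c,a) is unique. -/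
open Matrix

/-- The coadjoint action Ad*(x,g)(c,a) = (ǧ c g⁻¹, g a g⁻¹ + x ǧ c g⁻¹),
    where ǧ = (gᵀ)⁻¹. -/
noncomputable def coadjAct {n : ℕ} (x g c a : Matrix (Fin n) (Fin n) ℝ) :
    Matrix (Fin n) (Fin n) ℝ × Matrix (Fin n) (Fin n) ℝ :=
  ((gᵀ)⁻¹ * c * g⁻¹, g * a * g⁻¹ + x * ((gᵀ)⁻¹ * c * g⁻¹))

/-- The n×n skew-symmetric block-diagonal matrix with k consecutive 2×2 blocks
    [[0, λᵢ],[−λᵢ, 0]] (and a final zero block if n > 2k). -/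
def Hmat (n k : ℕ) (lam : Fin k → ℝ) : Matrix (Fin n) (Fin n) ℝ :=
  fun i j =>
    if h1 : (j : ℕ) = (i : ℕ) + 1 ∧ (i : ℕ) % 2 = 0 ∧ (i : ℕ) / 2 < k then
      lam ⟨(i : ℕ) / 2, h1.2.2⟩
    else if h2 : (i : ℕ) = (j : ℕ) + 1 ∧ (j : ℕ) % 2 = 0 ∧ (j : ℕ) / 2 < k then
      -lam ⟨(j : ℕ) / 2, h2.2.2⟩
    else 0

/-!
For `g` with `gᵀ g = c` the first component of `Ad*(x, g)(c, a)` is `1`, the second is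
`g a g⁻¹ + x`, and `x` absorbs the symmetric part of `g a g⁻¹`: what remains of the orbit is the
skew part of `g a g⁻¹`, up to conjugation by the orthogonal matrices relating the different `g`.

A skew-adjoint operator `T` rotates, with factor `‖T‖`, the plane spanned by a unit vector `e` at
which its norm is attained and by `T e`. Peeling off this plane and passing to its orthogonal
complement, where the norm can only drop, produces `H(λ)` with `λ` nonincreasing. In odd dimension
`-1` has determinant `-1`, so the conjugating orthogonal matrix can be taken in `SO(n)`. Finally `λ`
is determined by the conjugacy class of `H(λ)`, because `H(λ)²` is diagonal with entries `-λᵢ²`.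
-/

open scoped RealInnerProductSpace

section OperatorNorm

variable {E F : Type*}

theorem exists_norm_eq_one_norm_apply_eq_opNorm [NormedAddCommGroup E] [NormedSpace ℝ E]
    [FiniteDimensional ℝ E] [Nontrivial E] [NormedAddCommGroup F] [NormedSpace ℝ F]
    (T : E →L[ℝ] F) : ∃ e, ‖e‖ = 1 ∧ ‖T e‖ = ‖T‖ := by
  have hne : (Metric.sphere (0 : E) 1).Nonempty := NormedSpace.sphere_nonempty.mpr zero_le_one
  obtain ⟨e, he, hmax⟩ := (isCompact_sphere (0 : E) 1).exists_sSup_image_eq hne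
    T.continuous.norm.continuousOn
  exact ⟨e, mem_sphere_zero_iff_norm.mp he, hmax.symm.trans T.sSup_sphere_eq_norm⟩

variable {𝕜 : Type*} [RCLike 𝕜] [NormedAddCommGroup E] [InnerProductSpace 𝕜 E] [CompleteSpace E]
  [NormedAddCommGroup F] [InnerProductSpace 𝕜 F] [CompleteSpace F]

-- The square of the distance between the two sides is `‖T†Te‖² - 2‖T‖²‖Te‖² + ‖T‖⁴‖e‖²`.
theorem adjoint_apply_apply_of_norm_apply_eq (T : E →L[𝕜] F) {e : E} (he : ‖T e‖ = ‖T‖ * ‖e‖) :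
    T.adjoint (T e) = ((‖T‖ ^ 2 : ℝ) : 𝕜) • e := by
  have hle : ‖T.adjoint (T e)‖ ≤ ‖T‖ ^ 2 * ‖e‖ := by
    calc ‖T.adjoint (T e)‖ ≤ ‖T.adjoint‖ * ‖T e‖ := T.adjoint.le_opNorm _
      _ = ‖T‖ ^ 2 * ‖e‖ := by rw [LinearIsometryEquiv.norm_map, he]; ring
  have hcross : RCLike.re (inner 𝕜 (T.adjoint (T e)) (((‖T‖ ^ 2 : ℝ) : 𝕜) • e)) =
      ‖T‖ ^ 4 * ‖e‖ ^ 2 := by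
    rw [inner_smul_right, RCLike.re_ofReal_mul, ContinuousLinearMap.adjoint_inner_left,
      inner_self_eq_norm_sq, he]
    ring
  have hsmul : ‖((‖T‖ ^ 2 : ℝ) : 𝕜) • e‖ = ‖T‖ ^ 2 * ‖e‖ := by
    rw [norm_smul, RCLike.norm_ofReal, abs_of_nonneg (sq_nonneg _)]
  rw [← sub_eq_zero, ← norm_eq_zero, ← sq_eq_zero_iff]
  refine le_antisymm ?_ (sq_nonneg _)
  rw [@norm_sub_sq 𝕜, hcross, hsmul]
  linarith [pow_le_pow_left₀ (norm_nonneg _) hle 2]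

end OperatorNorm

section SkewAdjointOperator

section RCLike

variable {𝕜 E : Type*} [RCLike 𝕜] [NormedAddCommGroup E] [InnerProductSpace 𝕜 E] [CompleteSpace E]
  {T : E →L[𝕜] E} {K : Submodule 𝕜 E}

theorem mem_skewAdjoint_iff_inner :
    T ∈ skewAdjoint (E →L[𝕜] E) ↔ ∀ x y, inner 𝕜 (T x) y = -inner 𝕜 x (T y) := by
  rw [skewAdjoint.mem_iff, ContinuousLinearMap.star_eq_adjoint, eq_comm,
    ContinuousLinearMap.eq_adjoint_iff]
  simp only [_root_.neg_apply, inner_neg_left, neg_eq_iff_eq_neg]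

theorem apply_mem_orthogonal_of_mem_skewAdjoint (hT : T ∈ skewAdjoint (E →L[𝕜] E))
    (hK : ∀ x ∈ K, T x ∈ K) : ∀ x ∈ Kᗮ, T x ∈ Kᗮ := by
  refine ContinuousLinearMap.orthogonal_mem_invtSubmodule (T := T) fun x hx => ?_
  rw [← ContinuousLinearMap.star_eq_adjoint, skewAdjoint.mem_iff.mp hT]
  exact K.neg_mem (hK x hx)

theorem restrict_mem_skewAdjoint [CompleteSpace K] (hT : T ∈ skewAdjoint (E →L[𝕜] E))
    (hK : ∀ x ∈ K, T x ∈ K) : T.restrict hK ∈ skewAdjoint (K →L[𝕜] K) :=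
  mem_skewAdjoint_iff_inner.mpr fun x y => mem_skewAdjoint_iff_inner.mp hT x y

end RCLike

variable {E : Type*} [NormedAddCommGroup E] [InnerProductSpace ℝ E] {T : E →L[ℝ] E}

theorem inner_apply_self_eq_zero_of_mem_skewAdjoint [CompleteSpace E]
    (hT : T ∈ skewAdjoint (E →L[ℝ] E)) (x : E) : ⟪x, T x⟫ = 0 := by
  have h := mem_skewAdjoint_iff_inner.mp hT x x
  rw [real_inner_comm] at h
  linarith

theorem exists_orthonormal_pair_of_mem_skewAdjoint [FiniteDimensional ℝ E]
    (hT : T ∈ skewAdjoint (E →L[ℝ] E)) (hE : 2 ≤ Module.finrank ℝ E) :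
    ∃ e f : E, Orthonormal ℝ ![e, f] ∧ T e = -‖T‖ • f ∧ T f = ‖T‖ • e := by
  rcases eq_or_ne T 0 with rfl | hT0
  · refine ⟨stdOrthonormalBasis ℝ E ⟨0, by omega⟩, stdOrthonormalBasis ℝ E ⟨1, by omega⟩,
      by simp, by simp, by simp⟩
  have : Nontrivial E := Module.nontrivial_of_finrank_pos (R := ℝ) (by omega)
  obtain ⟨e, he, hTe⟩ := exists_norm_eq_one_norm_apply_eq_opNorm T
  have hl : ‖T‖ ≠ 0 := norm_ne_zero_iff.mpr hT0
  have hTTe : T (T e) = -‖T‖ ^ 2 • e := by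
    have hadj : T.adjoint = -T := skewAdjoint.mem_iff.mp hT
    simpa [hadj, neg_eq_iff_eq_neg] using
      adjoint_apply_apply_of_norm_apply_eq T (e := e) (by rw [hTe, he, mul_one])
  refine ⟨e, -(‖T‖⁻¹ • T e), ?_, ?_, ?_⟩
  · simp [norm_smul, he, hTe, hl, inner_smul_right,
      inner_apply_self_eq_zero_of_mem_skewAdjoint hT]
  · rw [smul_neg, neg_smul, neg_neg, smul_inv_smul₀ hl]
  · rw [map_neg, map_smul, hTTe, smul_smul, ← neg_smul]
    congr 1
    field_simp

end SkewAdjointOperator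

section NormalForm

variable {n k : ℕ}

theorem Hmat_mem_skewAdjoint (lam : Fin k → ℝ) :
    Hmat n k lam ∈ skewAdjoint (Matrix (Fin n) (Fin n) ℝ) := by
  rw [skewAdjoint.mem_iff, star_eq_conjTranspose, conjTranspose_eq_transpose_of_trivial]
  ext i j
  simp only [Hmat, transpose_apply, Matrix.neg_apply]
  split_ifs <;> first | omega | simp

theorem Hmat_vecCons_succ_succ (l : ℝ) (lam : Fin k → ℝ) (i j : Fin n) :
    Hmat (n + 2) (k + 1) (vecCons l lam) i.succ.succ j.succ.succ = Hmat n k lam i j := by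
  have htail (m : ℕ) (h : (m + 1 + 1) / 2 < k + 1) (h' : m / 2 < k) :
      vecCons l lam ⟨(m + 1 + 1) / 2, h⟩ = lam ⟨m / 2, h'⟩ := by
    rw [show (⟨(m + 1 + 1) / 2, h⟩ : Fin (k + 1)) = Fin.succ ⟨m / 2, h'⟩ from
      Fin.ext (by simp only [Fin.val_succ]; omega), cons_val_succ]
  simp only [Hmat, Fin.val_succ]
  split_ifs <;> first | omega | exact htail _ _ _ | exact congrArg _ (htail _ _ _) | rfl

theorem Hmat_apply_even_odd (hn : 2 * k ≤ n) (lam : Fin k → ℝ) (i : Fin k) :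
    Hmat n k lam ⟨2 * i, by omega⟩ ⟨2 * i + 1, by omega⟩ = lam i := by
  simp [Hmat]

theorem Hmat_mulVec_single_even (hn : 2 * k ≤ n) (lam : Fin k → ℝ) (i : Fin k) :
    Hmat n k lam *ᵥ Pi.single ⟨2 * i, by omega⟩ 1 = -lam i • Pi.single ⟨2 * i + 1, by omega⟩ 1 := by
  rw [mulVec_single_one]
  ext j
  simp only [Hmat, col_apply, Pi.smul_apply, Pi.single_apply, Fin.ext_iff, smul_eq_mul]
  split_ifs <;> first | omega | simp

theorem Hmat_mulVec_single_odd (hn : 2 * k ≤ n) (lam : Fin k → ℝ) (i : Fin k) :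
    Hmat n k lam *ᵥ Pi.single ⟨2 * i + 1, by omega⟩ 1 = lam i • Pi.single ⟨2 * i, by omega⟩ 1 := by
  rw [mulVec_single_one]
  ext j
  simp only [Hmat, col_apply, Pi.smul_apply, Pi.single_apply, Fin.ext_iff, smul_eq_mul]
  split_ifs <;> first | omega | simp [*]

theorem Hmat_mulVec_single_of_le (lam : Fin k → ℝ) {j : Fin n} (hj : 2 * k ≤ j) :
    Hmat n k lam *ᵥ Pi.single j 1 = 0 := by
  rw [mulVec_single_one]
  ext i
  simp only [Hmat, col_apply, Pi.zero_apply]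
  split_ifs <;> first | omega | rfl

/-- The diagonal of `H(λ)²`: each `-λᵢ²` twice, followed by zeros. The squares turn the spectrum of
`H(λ)` into real numbers, which are already sorted when `λ` is nonincreasing and nonnegative. -/
def hmatSqDiag (n k : ℕ) (lam : Fin k → ℝ) (j : Fin n) : ℝ :=
  if h : (j : ℕ) / 2 < k then -lam ⟨j / 2, h⟩ ^ 2 else 0

theorem hmatSqDiag_even (hn : 2 * k ≤ n) (lam : Fin k → ℝ) (i : Fin k) :
    hmatSqDiag n k lam ⟨2 * i, by omega⟩ = -lam i ^ 2 := by
  simp [hmatSqDiag]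

theorem hmatSqDiag_odd (hn : 2 * k ≤ n) (lam : Fin k → ℝ) (i : Fin k) :
    hmatSqDiag n k lam ⟨2 * i + 1, by omega⟩ = -lam i ^ 2 := by
  have hi : (2 * (i : ℕ) + 1) / 2 = i := by omega
  simp [hmatSqDiag, hi]

theorem Hmat_sq_eq_diagonal (hn : 2 * k ≤ n) (lam : Fin k → ℝ) :
    Hmat n k lam ^ 2 = diagonal (hmatSqDiag n k lam) := by
  refine ext_of_mulVec_single fun j => ?_
  rw [diagonal_mulVec_single, sq, ← mulVec_mulVec, mul_one]
  by_cases hj : (j : ℕ) / 2 < k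
  · obtain ⟨i, hi | hi⟩ : ∃ i : Fin k, j = ⟨2 * i, by omega⟩ ∨ j = ⟨2 * i + 1, by omega⟩ :=
      ⟨⟨j / 2, hj⟩, by simp only [Fin.ext_iff]; omega⟩
    · rw [hi, Hmat_mulVec_single_even hn, mulVec_smul, Hmat_mulVec_single_odd hn,
        hmatSqDiag_even hn, smul_smul, ← Pi.single_smul, smul_eq_mul, mul_one, sq, neg_mul]
    · rw [hi, Hmat_mulVec_single_odd hn, mulVec_smul, Hmat_mulVec_single_even hn,
        hmatSqDiag_odd hn, smul_smul, ← Pi.single_smul, smul_eq_mul, mul_one, sq, mul_neg]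
  · rw [Hmat_mulVec_single_of_le lam (by omega), mulVec_zero, hmatSqDiag, dif_neg hj,
      Pi.single_zero]

theorem monotone_hmatSqDiag {lam : Fin k → ℝ} (hlam : Antitone lam) (h0 : ∀ i, 0 ≤ lam i) :
    Monotone (hmatSqDiag n k lam) := by
  intro i j hij
  have hdiv : (i : ℕ) / 2 ≤ j / 2 := Nat.div_le_div_right hij
  simp only [hmatSqDiag]
  split_ifs
  · exact neg_le_neg (pow_le_pow_left₀ (h0 _) (hlam hdiv) 2)
  · exact neg_nonpos.mpr (sq_nonneg _)
  · omega
  · exact le_rfl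

theorem eq_of_isConj_diagonal_of_monotone {R : Type*} [CommRing R] [IsDomain R] [PartialOrder R]
    {d d' : Fin n → R} (hd : Monotone d) (hd' : Monotone d')
    (h : IsConj (diagonal d) (diagonal d')) : d = d' := by
  obtain ⟨P, hP⟩ := h
  have hchar : (diagonal d).charpoly = (diagonal d').charpoly := by
    rw [← charpoly_units_conj P, hP.eq, mul_assoc, ← coe_units_inv, P.mul_inv, mul_one]
  have hroots (s : Fin n → R) : (diagonal s).charpoly.roots = Finset.univ.val.map s := by
    rw [charpoly_diagonal, ← Polynomial.roots_multiset_prod_X_sub_C (Finset.univ.val.map s),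
      Multiset.map_map]
    rfl
  have hperm : (List.ofFn d).Perm (List.ofFn d') := by
    simpa only [hroots, Fin.univ_val_map, Multiset.coe_eq_coe] using
      congrArg Polynomial.roots hchar
  exact List.ofFn_injective (hperm.eq_of_sortedLE hd.sortedLE_ofFn hd'.sortedLE_ofFn)

theorem eq_of_isConj_Hmat (hn : 2 * k ≤ n) {lam lam' : Fin k → ℝ}
    (hlam : Antitone lam) (h0 : ∀ i, 0 ≤ lam i) (hlam' : Antitone lam') (h0' : ∀ i, 0 ≤ lam' i)
    (h : IsConj (Hmat n k lam) (Hmat n k lam')) : lam = lam' := by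
  have hsq := h.pow 2
  rw [Hmat_sq_eq_diagonal hn, Hmat_sq_eq_diagonal hn] at hsq
  have hdiag := eq_of_isConj_diagonal_of_monotone (monotone_hmatSqDiag hlam h0)
    (monotone_hmatSqDiag hlam' h0') hsq
  funext i
  have hi := congrFun hdiag ⟨2 * i, by omega⟩
  rw [hmatSqDiag_even hn, hmatSqDiag_even hn, neg_inj] at hi
  exact (pow_left_inj₀ (h0 i) (h0' i) two_ne_zero).mp hi

end NormalForm

section OrthogonalGroup

variable {m R : Type*} [Fintype m] [DecidableEq m] [CommRing R]

theorem transpose_mul_self_eq_iff_exists_orthogonal {g g' : Matrix m m R} (hg : IsUnit g.det) :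
    g'ᵀ * g' = gᵀ * g ↔ ∃ P ∈ orthogonalGroup m R, g' = P * g := by
  constructor
  · intro h
    refine ⟨g' * g⁻¹, (mem_orthogonalGroup_iff' m R).mpr ?_,
      (nonsing_inv_mul_cancel_right _ _ hg).symm⟩
    rw [transpose_mul, mul_assoc, ← mul_assoc g'ᵀ, h, mul_assoc, mul_nonsing_inv _ hg, mul_one,
      ← transpose_mul, mul_nonsing_inv _ hg, transpose_one]
  · rintro ⟨P, hP, rfl⟩
    rw [transpose_mul, mul_assoc, ← mul_assoc Pᵀ, (mem_orthogonalGroup_iff' m R).mp hP, one_mul]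

theorem isConj_mul_mul_transpose_of_mem_orthogonalGroup {P : Matrix m m R}
    (hP : P ∈ orthogonalGroup m R) (B : Matrix m m R) : IsConj B (P * B * Pᵀ) := by
  have hPP := (mem_orthogonalGroup_iff' m R).mp hP
  refine ⟨⟨P, Pᵀ, (mem_orthogonalGroup_iff m R).mp hP, hPP⟩, ?_⟩
  rw [SemiconjBy, mul_assoc, hPP, mul_one]

theorem det_eq_one_or_neg_one_of_mem_orthogonalGroup [NoZeroDivisors R]
    {P : Matrix m m R} (hP : P ∈ orthogonalGroup m R) : P.det = 1 ∨ P.det = -1 := by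
  have hdet := congrArg det ((mem_orthogonalGroup_iff m R).mp hP)
  rw [det_mul, det_transpose, det_one] at hdet
  exact mul_self_eq_one_iff.mp hdet

end OrthogonalGroup

section SpectralTheorem

variable {E : Type*} [NormedAddCommGroup E] [InnerProductSpace ℝ E] {n k : ℕ}

theorem antitone_vecCons_of_le {α : Type*} [Preorder α] {l : α} {f : Fin k → α} (hf : Antitone f)
    (hl : ∀ i, f i ≤ l) : Antitone (vecCons l f) := by
  cases k with
  | zero => exact Subsingleton.antitone _
  | succ k => exact antitone_vecCons.mpr ⟨hl 0, hf⟩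

theorem orthonormal_vecCons_vecCons_coe {𝕜 V : Type*} [RCLike 𝕜] [NormedAddCommGroup V]
    [InnerProductSpace 𝕜 V] {K : Submodule 𝕜 V} {e f : V} (he : e ∈ K) (hf : f ∈ K)
    (hef : Orthonormal 𝕜 ![e, f]) {b : Fin n → Kᗮ} (hb : Orthonormal 𝕜 b) :
    Orthonormal 𝕜 (vecCons e (vecCons f fun i => (b i : V))) := by
  have hKb {v : V} (hv : v ∈ K) (i : Fin n) : inner 𝕜 v (b i : V) = 0 :=
    Submodule.inner_right_of_mem_orthogonal hv (b i).2
  obtain ⟨he1, hef, hf1⟩ := orthonormal_vecCons_iff.mp hef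
  exact orthonormal_vecCons_iff.mpr ⟨he1, Fin.cases (hef 0) (hKb he),
    orthonormal_vecCons_iff.mpr ⟨(orthonormal_vecCons_iff.mp hf1).1, hKb hf,
      hb.comp_linearIsometry Kᗮ.subtypeₗᵢ⟩⟩

theorem le_opNorm_of_inner_eq_Hmat (hn : 2 * k ≤ n) {T : E →L[ℝ] E} {lam : Fin k → ℝ}
    {b : Fin n → E} (hb : Orthonormal ℝ b) (hH : ∀ i j, ⟪b i, T (b j)⟫ = Hmat n k lam i j)
    (i : Fin k) : lam i ≤ ‖T‖ := by
  rw [← Hmat_apply_even_odd hn lam i, ← hH]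
  calc ⟪b _, T (b _)⟫ ≤ ‖b _‖ * ‖T (b _)‖ := real_inner_le_norm _ _
    _ ≤ ‖b _‖ * (‖T‖ * ‖b _‖) := by gcongr; exact T.le_opNorm _
    _ = ‖T‖ := by rw [hb.norm_eq_one, hb.norm_eq_one, one_mul, mul_one]

theorem inner_vecCons_vecCons_eq_Hmat [CompleteSpace E] {T : E →L[ℝ] E}
    (hT : T ∈ skewAdjoint (E →L[ℝ] E)) {l : ℝ} {lam : Fin k → ℝ} {e f : E} {b : Fin n → E}
    (hefb : Orthonormal ℝ (vecCons e (vecCons f b))) (hTe : T e = -l • f) (hTf : T f = l • e)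
    (hH : ∀ i j, ⟪b i, T (b j)⟫ = Hmat n k lam i j) (i j : Fin (n + 2)) :
    ⟪vecCons e (vecCons f b) i, T (vecCons e (vecCons f b) j)⟫ =
      Hmat (n + 2) (k + 1) (vecCons l lam) i j := by
  obtain ⟨he, hefb, hfb⟩ := orthonormal_vecCons_iff.mp hefb
  obtain ⟨hf, hfb, -⟩ := orthonormal_vecCons_iff.mp hfb
  have hef : ⟪e, f⟫ = 0 := hefb 0
  have hfe : ⟪f, e⟫ = 0 := inner_eq_zero_symm.mp hef
  have heb (i : Fin n) : ⟪e, b i⟫ = 0 := hefb i.succ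
  have hbe (i : Fin n) : ⟪b i, e⟫ = 0 := inner_eq_zero_symm.mp (heb i)
  have hbf (i : Fin n) : ⟪b i, f⟫ = 0 := inner_eq_zero_symm.mp (hfb i)
  have hTb (v : E) (j : Fin n) : ⟪v, T (b j)⟫ = -⟪T v, b j⟫ := by
    rw [mem_skewAdjoint_iff_inner.mp hT, neg_neg]
  refine Fin.cases ?_ (Fin.cases ?_ fun i => ?_) i <;>
    refine Fin.cases ?_ (Fin.cases ?_ fun j => ?_) j
  · simp [Hmat, hTe, inner_smul_right, hef]
  · simp [Hmat, hTf, inner_smul_right, he]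
  · simp [Hmat, hTb, hTe, inner_smul_left, hfb]
  · simp [Hmat, hTe, inner_smul_right, hf]
  · simp [Hmat, hTf, inner_smul_right, hfe]
  · simp [Hmat, hTb, hTf, inner_smul_left, heb]
  · simp [Hmat, hTe, inner_smul_right, hbf]
  · simp [Hmat, hTf, inner_smul_right, hbe]
  · simpa [Hmat_vecCons_succ_succ] using hH i j

theorem exists_orthonormal_inner_eq_Hmat [FiniteDimensional ℝ E] {T : E →L[ℝ] E}
    (hT : T ∈ skewAdjoint (E →L[ℝ] E)) (hE : Module.finrank ℝ E = n) (hn : n / 2 = k) :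
    ∃ (lam : Fin k → ℝ) (b : Fin n → E), Antitone lam ∧ (∀ i, 0 ≤ lam i) ∧ Orthonormal ℝ b ∧
      ∀ i j, ⟪b i, T (b j)⟫ = Hmat n k lam i j := by
  induction k generalizing n E with
  | zero =>
    let b := (stdOrthonormalBasis ℝ E).reindex (finCongr hE)
    refine ⟨![], b, fun i => i.elim0, fun i => i.elim0, b.orthonormal, fun i j => ?_⟩
    rw [show j = i from Fin.ext (by omega), inner_apply_self_eq_zero_of_mem_skewAdjoint hT]
    simp [Hmat]
  | succ k ih =>
    obtain ⟨n, rfl⟩ : ∃ m, n = m + 2 := ⟨n - 2, by omega⟩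
    obtain ⟨e, f, hef, hTe, hTf⟩ := exists_orthonormal_pair_of_mem_skewAdjoint hT (by omega)
    let K : Submodule ℝ E := Submodule.span ℝ (Set.range ![e, f])
    have heK : e ∈ K := Submodule.subset_span ⟨0, rfl⟩
    have hfK : f ∈ K := Submodule.subset_span ⟨1, rfl⟩
    have hfinrank : Module.finrank ℝ Kᗮ = n := by
      have hK : Module.finrank ℝ K = 2 := finrank_span_eq_card hef.linearIndependent
      have hadd := K.finrank_add_finrank_orthogonal
      omega
    have hTK : K ≤ K.comap (T : E →ₗ[ℝ] E) := by
      rw [Submodule.span_le, Set.range_subset_iff, Fin.forall_fin_two]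
      exact ⟨show T e ∈ K from hTe ▸ K.smul_mem _ hfK, show T f ∈ K from hTf ▸ K.smul_mem _ heK⟩
    have hTK' := apply_mem_orthogonal_of_mem_skewAdjoint hT hTK
    obtain ⟨lam, b, hlam, h0, hb, hH⟩ :=
      ih (restrict_mem_skewAdjoint hT hTK') hfinrank (by omega)
    have hle : ∀ i, lam i ≤ ‖T‖ :=
      le_opNorm_of_inner_eq_Hmat (by omega) (hb.comp_linearIsometry Kᗮ.subtypeₗᵢ) hH
    have hefb := orthonormal_vecCons_vecCons_coe heK hfK hef hb
    exact ⟨vecCons ‖T‖ lam, _, antitone_vecCons_of_le hlam hle, Fin.cases (norm_nonneg T) h0, hefb,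
      inner_vecCons_vecCons_eq_Hmat hT hefb hTe hTf hH⟩

theorem exists_orthogonal_conj_eq_Hmat (hn : n / 2 = k) {B : Matrix (Fin n) (Fin n) ℝ}
    (hB : B ∈ skewAdjoint (Matrix (Fin n) (Fin n) ℝ)) :
    ∃ P ∈ orthogonalGroup (Fin n) ℝ, ∃ lam : Fin k → ℝ, Antitone lam ∧ (∀ i, 0 ≤ lam i) ∧
      P * B * Pᵀ = Hmat n k lam := by
  let T := toEuclideanCLM (n := Fin n) (𝕜 := ℝ) B
  have hT : T ∈ skewAdjoint (EuclideanSpace ℝ (Fin n) →L[ℝ] EuclideanSpace ℝ (Fin n)) := by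
    rw [skewAdjoint.mem_iff, ← map_star, skewAdjoint.mem_iff.mp hB, map_neg]
  obtain ⟨lam, b, hlam, h0, hb, hH⟩ := exists_orthonormal_inner_eq_Hmat hT
    finrank_euclideanSpace_fin hn
  refine ⟨of fun i j => b i j, ?_, lam, hlam, h0, ?_⟩
  · rw [mem_orthogonalGroup_iff]
    ext i j
    rw [one_apply, ← orthonormal_iff_ite.mp hb i j]
    simp [mul_apply, PiLp.inner_apply, mul_comm]
  · ext i j
    rw [← hH, mul_mul_apply, inner_toEuclideanCLM]
    rfl

theorem exists_specialOrthogonal_conj_eq_Hmat_of_odd (hn : Odd n) (hk : n / 2 = k)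
    {B : Matrix (Fin n) (Fin n) ℝ} (hB : B ∈ skewAdjoint (Matrix (Fin n) (Fin n) ℝ)) :
    ∃ P ∈ specialOrthogonalGroup (Fin n) ℝ, ∃ lam : Fin k → ℝ, Antitone lam ∧ (∀ i, 0 ≤ lam i) ∧
      P * B * Pᵀ = Hmat n k lam := by
  obtain ⟨P, hP, lam, hlam, h0, hPB⟩ := exists_orthogonal_conj_eq_Hmat hk hB
  rcases det_eq_one_or_neg_one_of_mem_orthogonalGroup hP with hdet | hdet
  · exact ⟨P, mem_specialOrthogonalGroup_iff.mpr ⟨hP, hdet⟩, lam, hlam, h0, hPB⟩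
  · refine ⟨-P, mem_specialOrthogonalGroup_iff.mpr ⟨?_, ?_⟩, lam, hlam, h0, ?_⟩
    · rwa [mem_orthogonalGroup_iff, transpose_neg, neg_mul_neg, ← mem_orthogonalGroup_iff]
    · rw [det_neg, hdet, Fintype.card_fin, hn.neg_one_pow, neg_mul_neg, mul_one]
    · rw [transpose_neg, neg_mul, neg_mul_neg, hPB]

end SpectralTheorem

open scoped MatrixOrder ComplexOrder in
theorem exists_det_pos_conjTranspose_mul_self_eq {m 𝕜 : Type*} [Fintype m] [DecidableEq m]
    [RCLike 𝕜] {c : Matrix m m 𝕜} (hc : c.PosDef) : ∃ g : Matrix m m 𝕜, 0 < g.det ∧ gᴴ * g = c := by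
  have hsqrt : (CFC.sqrt c).PosSemidef := (CFC.sqrt_nonneg c).posSemidef
  have hmul : CFC.sqrt c * CFC.sqrt c = c := CFC.sqrt_mul_sqrt_self c hc.posSemidef.nonneg
  refine ⟨CFC.sqrt c, hsqrt.det_nonneg.lt_of_ne' fun h => hc.det_pos.ne' ?_, ?_⟩
  · rw [← hmul, det_mul, h, zero_mul]
  · rw [hsqrt.isHermitian.eq, hmul]

section SkewAdjointPart

variable {R A : Type*} [Semiring R] [StarMul R] [TrivialStar R] [Invertible (2 : R)]

theorem coe_skewAdjointPart_mul_mul_star [Ring A] [StarRing A] [Module R A] [StarModule R A]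
    [SMulCommClass R A A] [IsScalarTower R A A] (u x : A) :
    (skewAdjointPart R (u * x * star u) : A) = u * skewAdjointPart R x * star u := by
  simp only [skewAdjointPart_apply_coe, star_mul, star_star, mul_smul_comm, smul_mul_assoc,
    mul_sub, sub_mul, mul_assoc]

theorem exists_isSelfAdjoint_add_eq_iff [AddCommGroup A] [StarAddMonoid A] [Module R A]
    [StarModule R A] {y h : A} (hh : h ∈ skewAdjoint A) :
    (∃ x, IsSelfAdjoint x ∧ y + x = h) ↔ (skewAdjointPart R y : A) = h := by
  constructor
  · rintro ⟨x, hx, rfl⟩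
    have hfix := LinearMap.congr_fun (skewAdjointPart_comp_subtype_skewAdjoint R) ⟨y + x, hh⟩
    rw [LinearMap.comp_apply, Submodule.subtype_apply, map_add, hx.skewAdjointPart_apply R,
      add_zero] at hfix
    exact congrArg Subtype.val hfix
  · rintro rfl
    refine ⟨-selfAdjointPart R y, (selfAdjointPart R y).2.neg, ?_⟩
    rw [← sub_eq_add_neg, sub_eq_iff_eq_add', StarModule.selfAdjointPart_add_skewAdjointPart]

variable {m : Type*} [Fintype m] [DecidableEq m]

theorem coe_skewAdjointPart_orthogonal_mul {P : Matrix m m ℝ}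
    (hP : P ∈ orthogonalGroup m ℝ) (g a : Matrix m m ℝ) :
    (skewAdjointPart ℝ (P * g * a * (P * g)⁻¹) : Matrix m m ℝ) =
      P * skewAdjointPart ℝ (g * a * g⁻¹) * Pᵀ := by
  rw [← conjTranspose_eq_transpose_of_trivial, ← star_eq_conjTranspose,
    ← coe_skewAdjointPart_mul_mul_star, Matrix.mul_inv_rev,
    inv_eq_right_inv (mem_unitaryGroup_iff.mp hP)]
  simp only [mul_assoc]

theorem isConj_skewAdjointPart_of_transpose_mul_self_eq {g g' : Matrix m m ℝ}
    (hg : IsUnit g.det) (h : g'ᵀ * g' = gᵀ * g) (a : Matrix m m ℝ) :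
    IsConj (skewAdjointPart ℝ (g * a * g⁻¹) : Matrix m m ℝ)
      (skewAdjointPart ℝ (g' * a * g'⁻¹)) := by
  obtain ⟨P, hP, rfl⟩ := (transpose_mul_self_eq_iff_exists_orthogonal hg).mp h
  rw [coe_skewAdjointPart_orthogonal_mul hP]
  exact isConj_mul_mul_transpose_of_mem_orthogonalGroup hP _

end SkewAdjointPart

theorem exists_isSymm_and_coadjAct_eq_one_iff {n : ℕ} {g c a h : Matrix (Fin n) (Fin n) ℝ}
    (hg : IsUnit g.det) (hh : h ∈ skewAdjoint (Matrix (Fin n) (Fin n) ℝ)) :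
    (∃ x, x.IsSymm ∧ coadjAct x g c a = (1, h)) ↔
      gᵀ * g = c ∧ (skewAdjointPart ℝ (g * a * g⁻¹) : Matrix (Fin n) (Fin n) ℝ) = h := by
  let _ := invertibleOfIsUnitDet g hg
  have hone : (gᵀ)⁻¹ * c * g⁻¹ = 1 ↔ gᵀ * g = c := by
    rw [mul_inv_eq_iff_eq_mul_of_invertible, one_mul, inv_mul_eq_iff_eq_mul_of_invertible, eq_comm]
  rw [← exists_isSelfAdjoint_add_eq_iff hh, ← hone, ← exists_and_left]
  refine exists_congr fun x => ?_
  rw [← isHermitian_iff_isSymm, isHermitian_iff_isSelfAdjoint, coadjAct, Prod.mk.injEq,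
    and_left_comm]
  refine and_congr_right fun h1 => ?_
  rw [h1, mul_one]

theorem orbit_normal_form_odd (k : ℕ) (hk : 1 ≤ k)
    (c a : Matrix (Fin (2 * k + 1)) (Fin (2 * k + 1)) ℝ) (hc : c.PosDef) :
    (∃ (x g : Matrix (Fin (2 * k + 1)) (Fin (2 * k + 1)) ℝ) (lam : Fin k → ℝ),
      x.IsSymm ∧ 0 < g.det ∧ Antitone lam ∧ (∀ i, 0 ≤ lam i) ∧
      coadjAct x g c a = (1, Hmat (2 * k + 1) k lam)) ∧
    (∀ lam lam' : Fin k → ℝ,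
      Antitone lam → (∀ i, 0 ≤ lam i) → Antitone lam' → (∀ i, 0 ≤ lam' i) →
      (∃ x g : Matrix (Fin (2 * k + 1)) (Fin (2 * k + 1)) ℝ,
        x.IsSymm ∧ 0 < g.det ∧ coadjAct x g c a = (1, Hmat (2 * k + 1) k lam)) →
      (∃ x g : Matrix (Fin (2 * k + 1)) (Fin (2 * k + 1)) ℝ,
        x.IsSymm ∧ 0 < g.det ∧ coadjAct x g c a = (1, Hmat (2 * k + 1) k lam')) →
      lam = lam') := by
  constructor
  · obtain ⟨g, hg, hgc⟩ := exists_det_pos_conjTranspose_mul_self_eq hc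
    obtain ⟨P, hP, lam, hlam, h0, hPH⟩ := exists_specialOrthogonal_conj_eq_Hmat_of_odd (k := k)
      (odd_two_mul_add_one k) (by omega) (skewAdjointPart ℝ (g * a * g⁻¹)).2
    obtain ⟨hP, hPdet⟩ := mem_specialOrthogonalGroup_iff.mp hP
    have hPg : 0 < (P * g).det := by rwa [det_mul, hPdet, one_mul]
    have hPgc : (P * g)ᵀ * (P * g) = c :=
      ((transpose_mul_self_eq_iff_exists_orthogonal hg.ne'.isUnit).mpr ⟨P, hP, rfl⟩).trans hgc
    obtain ⟨x, hx, hact⟩ := (exists_isSymm_and_coadjAct_eq_one_iff hPg.ne'.isUnit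
      (Hmat_mem_skewAdjoint lam)).mpr ⟨hPgc, (coe_skewAdjointPart_orthogonal_mul hP g a).trans hPH⟩
    exact ⟨x, P * g, lam, hx, hPg, hlam, h0, hact⟩
  · rintro lam lam' hlam h0 hlam' h0' ⟨x, g, hx, hg, hact⟩ ⟨x', g', hx', hg', hact'⟩
    obtain ⟨hgc, hgH⟩ := (exists_isSymm_and_coadjAct_eq_one_iff hg.ne'.isUnit
      (Hmat_mem_skewAdjoint lam)).mp ⟨x, hx, hact⟩
    obtain ⟨hgc', hgH'⟩ := (exists_isSymm_and_coadjAct_eq_one_iff hg'.ne'.isUnit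
      (Hmat_mem_skewAdjoint lam')).mp ⟨x', hx', hact'⟩
    have hconj := isConj_skewAdjointPart_of_transpose_mul_self_eq hg.ne'.isUnit
      (hgc'.trans hgc.symm) a
    rw [hgH, hgH'] at hconj
    exact eq_of_isConj_Hmat (by omega) hlam h0 hlam' h0' hconj
end

section
/- Let n = 2k with k ≥ 1, let c be a positive definite symmetric n×n real matrix and a an arbitrary n×n real matrix. Then there exist a symmetric n×n real matrix x, a matrix g ∈ GL(n,ℝ) with det g > 0, and a tuple λ₁ ≥ λ₂ ≥ ⋯ ≥ λ_{k−1} ≥ |λ_k| (with λ_k possibly negative) such that Ad*(x,g)(c,a) = (1ₙ, H(λ)); moreover the tuple (λ₁,…,λ_k) satisfying λ₁ ≥ ⋯ ≥ λ_{k−1} ≥ |λ_k| for which (1ₙ, H(λ)) lies in the coadjoint orbit of (c,a) is unique. -/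
open Matrix

/-- The ordering condition λ₁ ≥ λ₂ ≥ ⋯ ≥ λ_{k−1} ≥ |λ_k| (λ_k possibly negative). -/
def EvenNormalForm {k : ℕ} (lam : Fin k → ℝ) : Prop :=
  ∀ i j : Fin k, i < j → |lam j| ≤ lam i

/-!
Since `c = Bᵀ * B` with `det B > 0`, an element of the group carries `(c, a)` to `(1, H)` with `H`
skew exactly when `g = Q * B` for some `Q ∈ SO(n)` and `H` is `Q`-conjugate to the skew part of
`B * a * B⁻¹`: the symmetric matrix `x` cancels the symmetric part. So the orbits are the
`SO(n)`-conjugacy classes of skew matrices. Such a matrix splits into planes on which it is a scaled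
quarter turn, and a reflection moves a possible sign to the last block. Conversely, conjugation
preserves the spectrum of `H * Hᵀ`, which determines the `λᵢ ^ 2`, and the Pfaffian `∏ λᵢ`, which
determines the remaining sign.
-/

section Pfaffian

variable {ι K : Type*} [Fintype ι] [DecidableEq ι] [Field K]

-- Up to the sign convention for `J`, this makes `det M` the Pfaffian of `M * J * Mᵀ`; the sign is
-- pinned down because symplectic matrices have determinant one.
lemma det_eq_det_of_mul_J_mul_transpose_eq {M N : Matrix (ι ⊕ ι) (ι ⊕ ι) K}
    (h : M * J ι K * Mᵀ = N * J ι K * Nᵀ) : M.det = N.det := by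
  have hsq : M.det ^ 2 = N.det ^ 2 := by
    have hdet := congrArg det h
    simp only [det_mul, det_transpose] at hdet
    refine (isUnit_det_J ι K).mul_left_cancel ?_
    linear_combination hdet
  by_cases hN : N.det = 0
  · rw [hN, zero_pow two_ne_zero] at hsq
    rw [hN, pow_eq_zero_iff two_ne_zero |>.mp hsq]
  have hmem : N⁻¹ * M ∈ symplecticGroup ι K := by
    have hu : IsUnit N.det := isUnit_iff_ne_zero.mpr hN
    have huT : IsUnit Nᵀ.det := by rwa [det_transpose]
    rw [SymplecticGroup.mem_iff]
    calc N⁻¹ * M * J ι K * (N⁻¹ * M)ᵀ = N⁻¹ * (M * J ι K * Mᵀ) * (Nᵀ)⁻¹ := by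
          simp only [transpose_mul, transpose_nonsing_inv, Matrix.mul_assoc]
      _ = N⁻¹ * (N * J ι K) * (Nᵀ * (Nᵀ)⁻¹) := by
          rw [h]
          simp only [Matrix.mul_assoc]
      _ = J ι K := by
          rw [nonsing_inv_mul_cancel_left _ _ hu, mul_nonsing_inv _ huT, Matrix.mul_one]
  have hone := SymplecticGroup.det_eq_one hmem
  rw [det_mul, det_nonsing_inv, Ring.inverse_eq_inv'] at hone
  field_simp at hone
  exact hone

end Pfaffian

section SkewNormalForm

variable {ι R : Type*} [DecidableEq ι] [CommRing R]

/-- The normal form `H(d)` in the basis listing the second vectors of all `2 × 2` blocks before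
the first ones; in this order it is a weighted version of `Matrix.J`. -/
def skewNormalForm (d : ι → R) : Matrix (ι ⊕ ι) (ι ⊕ ι) R :=
  fromBlocks 0 (-diagonal d) (diagonal d) 0

/-- The diagonal matrix rescaling the second half of the basis by `d`. -/
def halfScaling (d : ι → R) : Matrix (ι ⊕ ι) (ι ⊕ ι) R :=
  diagonal (Sum.elim 1 d)

lemma skewNormalForm_one : skewNormalForm (1 : ι → R) = J ι R := by
  simp [skewNormalForm, J]

lemma skewNormalForm_transpose (d : ι → R) : (skewNormalForm d)ᵀ = -skewNormalForm d := by
  simp [skewNormalForm, fromBlocks_transpose, fromBlocks_neg]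

lemma halfScaling_transpose (d : ι → R) : (halfScaling d)ᵀ = halfScaling d :=
  diagonal_transpose _

variable [Fintype ι]

lemma det_halfScaling (d : ι → R) : (halfScaling d).det = ∏ i, d i := by
  simp [halfScaling, Fintype.prod_sum_type]

lemma halfScaling_mul_skewNormalForm_mul_transpose (d e : ι → R) :
    halfScaling e * skewNormalForm d * (halfScaling e)ᵀ = skewNormalForm (e * d) := by
  rw [halfScaling_transpose, halfScaling, ← fromBlocks_diagonal, skewNormalForm, skewNormalForm,
    fromBlocks_multiply, fromBlocks_multiply]
  simp [mul_comm]

lemma skewNormalForm_eq_mul_J_mul (d : ι → R) :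
    skewNormalForm d = halfScaling d * J ι R * (halfScaling d)ᵀ := by
  rw [← skewNormalForm_one, halfScaling_mul_skewNormalForm_mul_transpose, mul_one]

lemma skewNormalForm_mul_transpose (d : ι → R) :
    skewNormalForm d * (skewNormalForm d)ᵀ = diagonal (Sum.elim (d ^ 2) (d ^ 2)) := by
  rw [skewNormalForm, fromBlocks_transpose, fromBlocks_multiply, ← fromBlocks_diagonal]
  simp [pow_two]

lemma halfScaling_mem_orthogonalGroup {e : ι → R} (he : e * e = 1) :
    halfScaling e ∈ orthogonalGroup (ι ⊕ ι) R := by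
  rw [mem_orthogonalGroup_iff, halfScaling_transpose, halfScaling, diagonal_mul_diagonal,
    ← diagonal_one]
  congr 1
  ext (i | i)
  · simp
  · simpa using congrFun he i

lemma det_mul_prod_eq_of_conj_skewNormalForm {K : Type*} [Field K] {d d' : ι → K}
    {G : Matrix (ι ⊕ ι) (ι ⊕ ι) K} (h : skewNormalForm d' = G * skewNormalForm d * Gᵀ) :
    ∏ i, d' i = G.det * ∏ i, d i := by
  rw [← det_halfScaling, ← det_halfScaling, ← det_mul]
  apply det_eq_det_of_mul_J_mul_transpose_eq
  rw [← skewNormalForm_eq_mul_J_mul, h, skewNormalForm_eq_mul_J_mul]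
  simp only [transpose_mul, Matrix.mul_assoc]

end SkewNormalForm

section Spectrum

lemma roots_charpoly_diagonal {n R : Type*} [Fintype n] [DecidableEq n] [CommRing R] [IsDomain R]
    (d : n → R) : (diagonal d).charpoly.roots = Finset.univ.val.map d := by
  rw [charpoly_diagonal, ← Polynomial.roots_multiset_prod_X_sub_C (Finset.univ.val.map d),
    Multiset.map_map]
  rfl

lemma charpoly_conj_of_mem_orthogonalGroup {n R : Type*} [Fintype n] [DecidableEq n] [CommRing R]
    {Q : Matrix n n R} (hQ : Q ∈ orthogonalGroup n R) (A : Matrix n n R) :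
    (Q * A * Qᵀ).charpoly = A.charpoly := by
  rw [charpoly_mul_comm, ← Matrix.mul_assoc, (mem_orthogonalGroup_iff' _ _).mp hQ, Matrix.one_mul]

lemma map_univ_sumElim_self {ι α : Type*} [Fintype ι] (f : ι → α) :
    Finset.univ.val.map (Sum.elim f f) = 2 • Finset.univ.val.map f := by
  rw [← Finset.univ_disjSum_univ, Finset.val_disjSum, Multiset.disjSum, Multiset.map_add,
    Multiset.map_map, Multiset.map_map, Sum.elim_comp_inl, Sum.elim_comp_inr, two_nsmul]

lemma map_sq_eq_of_conj_skewNormalForm {ι R : Type*} [Fintype ι] [DecidableEq ι] [CommRing R]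
    [IsDomain R] {d d' : ι → R} {Q : Matrix (ι ⊕ ι) (ι ⊕ ι) R} (hQ : Q ∈ orthogonalGroup (ι ⊕ ι) R)
    (h : skewNormalForm d' = Q * skewNormalForm d * Qᵀ) :
    Finset.univ.val.map (d ^ 2) = Finset.univ.val.map (d' ^ 2) := by
  have hgram : skewNormalForm d' * (skewNormalForm d')ᵀ =
      Q * (skewNormalForm d * (skewNormalForm d)ᵀ) * Qᵀ := by
    calc skewNormalForm d' * (skewNormalForm d')ᵀ
        = Q * skewNormalForm d * (Qᵀ * Q) * (skewNormalForm d)ᵀ * Qᵀ := by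
          simp only [h, transpose_mul, transpose_transpose, Matrix.mul_assoc]
      _ = Q * (skewNormalForm d * (skewNormalForm d)ᵀ) * Qᵀ := by
          rw [(mem_orthogonalGroup_iff' _ _).mp hQ]
          simp only [Matrix.mul_one, Matrix.mul_assoc]
  have hroots := congrArg (fun A => A.charpoly.roots) hgram
  simp only [charpoly_conj_of_mem_orthogonalGroup hQ, skewNormalForm_mul_transpose,
    roots_charpoly_diagonal, map_univ_sumElim_self] at hroots
  exact (nsmul_right_injective two_ne_zero hroots).symm

lemma antitone_eq_of_map_univ_eq {α : Type*} [LinearOrder α] {n : ℕ} {f g : Fin n → α}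
    (hf : Antitone f) (hg : Antitone g)
    (h : Finset.univ.val.map f = Finset.univ.val.map g) : f = g := by
  apply List.ofFn_injective
  refine List.Perm.eq_of_pairwise' hf.sortedGE_ofFn.pairwise hg.sortedGE_ofFn.pairwise ?_
  rw [← Multiset.coe_eq_coe]
  simpa only [Fin.univ_val_map] using h

end Spectrum

section Uniqueness

variable {k : ℕ} {lam lam' : Fin k → ℝ}

lemma EvenNormalForm.antitone_sq (h : EvenNormalForm lam) : Antitone (lam ^ 2) :=
  antitone_iff_forall_lt.mpr fun i j hij =>
    sq_le_sq.mpr ((h i j hij).trans (le_abs_self _))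

lemma EvenNormalForm.eq_of_sq_eq_of_prod_eq (h : EvenNormalForm lam) (h' : EvenNormalForm lam')
    (hsq : lam ^ 2 = lam' ^ 2) (hprod : ∏ i, lam i = ∏ i, lam' i) : lam = lam' := by
  cases k with
  | zero => exact Subsingleton.elim _ _
  | succ k =>
    have hinit (i : Fin k) : lam i.castSucc = lam' i.castSucc := by
      have hlam := (abs_nonneg _).trans (h i.castSucc (Fin.last k) i.castSucc_lt_last)
      have hlam' := (abs_nonneg _).trans (h' i.castSucc (Fin.last k) i.castSucc_lt_last)
      exact (sq_eq_sq₀ hlam hlam').mp (congrFun hsq i.castSucc)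
    have hlast : lam (Fin.last k) = lam' (Fin.last k) := by
      rw [Fin.prod_univ_castSucc, Fin.prod_univ_castSucc, Finset.prod_congr rfl fun i _ => hinit i,
        mul_eq_mul_left_iff, Finset.prod_eq_zero_iff] at hprod
      rcases hprod with heq | ⟨i, -, hzero⟩
      · exact heq
      · have hle := h i.castSucc (Fin.last k) i.castSucc_lt_last
        have hle' := h' i.castSucc (Fin.last k) i.castSucc_lt_last
        rw [hinit, hzero] at hle
        rw [hzero] at hle'
        rw [abs_nonpos_iff.mp hle, abs_nonpos_iff.mp hle']
    exact funext (Fin.lastCases hlast hinit)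

lemma EvenNormalForm.eq_of_conj (h : EvenNormalForm lam) (h' : EvenNormalForm lam')
    {Q : Matrix (Fin k ⊕ Fin k) (Fin k ⊕ Fin k) ℝ}
    (hQ : Q ∈ specialOrthogonalGroup (Fin k ⊕ Fin k) ℝ)
    (hconj : skewNormalForm lam' = Q * skewNormalForm lam * Qᵀ) : lam = lam' := by
  obtain ⟨horth, hdet⟩ := mem_specialOrthogonalGroup_iff.mp hQ
  apply h.eq_of_sq_eq_of_prod_eq h'
  · exact antitone_eq_of_map_univ_eq h.antitone_sq h'.antitone_sq
      (map_sq_eq_of_conj_skewNormalForm horth hconj)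
  · rw [det_mul_prod_eq_of_conj_skewNormalForm hconj, hdet, one_mul]

end Uniqueness

section SkewAdjoint

open scoped InnerProductSpace

variable {ι V : Type*} [NormedAddCommGroup V] [InnerProductSpace ℝ V] {T : V →ₗ[ℝ] V}

/-- Two orthonormal families `v`, `w`, orthogonal to each other, such that `T` acts on the plane
spanned by `v i` and `w i` as a quarter turn times `d i ≥ 0`. -/
structure IsRotationFamily (T : V →ₗ[ℝ] V) (v w : ι → V) (d : ι → ℝ) : Prop where
  orthonormal_left : Orthonormal ℝ v
  orthonormal_right : Orthonormal ℝ w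
  inner_eq_zero : ∀ i j, ⟪v i, w j⟫_ℝ = 0
  nonneg : ∀ i, 0 ≤ d i
  map_left : ∀ i, T (v i) = d i • w i
  map_right : ∀ i, T (w i) = -d i • v i

lemma IsRotationFamily.comp {κ : Type*} {v w : ι → V} {d : ι → ℝ} (h : IsRotationFamily T v w d)
    {f : κ → ι} (hf : Function.Injective f) : IsRotationFamily T (v ∘ f) (w ∘ f) (d ∘ f) where
  orthonormal_left := h.orthonormal_left.comp f hf
  orthonormal_right := h.orthonormal_right.comp f hf
  inner_eq_zero i j := h.inner_eq_zero (f i) (f j)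
  nonneg i := h.nonneg (f i)
  map_left i := h.map_left (f i)
  map_right i := h.map_right (f i)

lemma IsRotationFamily.of_restrict {W : Submodule ℝ V} {hW : ∀ x ∈ W, T x ∈ W} {v w : ι → W}
    {d : ι → ℝ} (h : IsRotationFamily (T.restrict hW) v w d) :
    IsRotationFamily T (fun i => (v i : V)) (fun i => (w i : V)) d where
  orthonormal_left := h.orthonormal_left.comp_linearIsometry W.subtypeₗᵢ
  orthonormal_right := h.orthonormal_right.comp_linearIsometry W.subtypeₗᵢ
  inner_eq_zero := h.inner_eq_zero
  nonneg := h.nonneg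
  map_left i := congrArg Subtype.val (h.map_left i)
  map_right i := congrArg Subtype.val (h.map_right i)

lemma IsRotationFamily.vecCons {k : ℕ} {v₀ w₀ : V} {d₀ : ℝ} {v w : Fin k → V} {d : Fin k → ℝ}
    (h₀ : IsRotationFamily T ![v₀] ![w₀] ![d₀]) (h : IsRotationFamily T v w d)
    (hv : ∀ i, ⟪v₀, v i⟫_ℝ = 0 ∧ ⟪w₀, v i⟫_ℝ = 0) (hw : ∀ i, ⟪v₀, w i⟫_ℝ = 0 ∧ ⟪w₀, w i⟫_ℝ = 0) :
    IsRotationFamily T (vecCons v₀ v) (vecCons w₀ w) (vecCons d₀ d) where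
  orthonormal_left := orthonormal_vecCons_iff.mpr
    ⟨h₀.orthonormal_left.norm_eq_one 0, fun i => (hv i).1, h.orthonormal_left⟩
  orthonormal_right := orthonormal_vecCons_iff.mpr
    ⟨h₀.orthonormal_right.norm_eq_one 0, fun i => (hw i).2, h.orthonormal_right⟩
  inner_eq_zero := Fin.cases
    (Fin.cases (h₀.inner_eq_zero 0 0) fun j => (hw j).1)
    fun i => Fin.cases ((real_inner_comm _ _).trans (hv i).2) (h.inner_eq_zero i)
  nonneg := Fin.cases (h₀.nonneg 0) h.nonneg
  map_left := Fin.cases (h₀.map_left 0) h.map_left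
  map_right := Fin.cases (h₀.map_right 0) h.map_right

lemma IsRotationFamily.orthonormal_sumElim {v w : ι → V} {d : ι → ℝ}
    (h : IsRotationFamily T v w d) : Orthonormal ℝ (Sum.elim v w) := by
  refine ⟨Sum.rec h.orthonormal_left.1 h.orthonormal_right.1, ?_⟩
  rintro (i | i) (j | j) hij
  · exact h.orthonormal_left.2 (ne_of_apply_ne _ hij)
  · exact h.inner_eq_zero i j
  · exact (real_inner_comm _ _).trans (h.inner_eq_zero j i)
  · exact h.orthonormal_right.2 (ne_of_apply_ne _ hij)

lemma map_mem_orthogonal_of_skew (hT : ∀ x y, ⟪T x, y⟫_ℝ = -⟪x, T y⟫_ℝ) {W : Submodule ℝ V}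
    (hW : ∀ x ∈ W, T x ∈ W) : ∀ x ∈ Wᗮ, T x ∈ Wᗮ := by
  intro x hx y hy
  rw [← neg_eq_zero, ← hT]
  exact hx (T y) (hW y hy)

lemma isRotationFamily_of_map_map_eq_smul (hT : ∀ x y, ⟪T x, y⟫_ℝ = -⟪x, T y⟫_ℝ) {v : V}
    (hv : ‖v‖ = 1) (hTv : T v ≠ 0) {μ : ℝ} (hμ : T (T v) = μ • v) :
    IsRotationFamily T ![v] ![‖T v‖⁻¹ • T v] ![‖T v‖] := by
  have hne : ‖T v‖ ≠ 0 := norm_ne_zero_iff.mpr hTv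
  have hperp : ⟪v, T v⟫_ℝ = 0 := by
    have h := hT v v
    rw [real_inner_comm] at h
    linarith
  have hμ_eq : μ = -‖T v‖ ^ 2 := by
    have h := hT v (T v)
    rw [hμ, inner_smul_right, real_inner_self_eq_norm_sq, real_inner_self_eq_norm_sq, hv] at h
    linarith
  refine ⟨by simpa using hv, by simp [norm_smul, hne], by simp [inner_smul_right, hperp], by simp,
    by simp [smul_smul, hne], ?_⟩
  intro i
  simp only [Matrix.cons_val_fin_one, map_smul, hμ, hμ_eq, smul_smul]
  congr 1
  field_simp

lemma exists_isRotationFamily_singleton [FiniteDimensional ℝ V]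
    (hT : ∀ x y, ⟪T x, y⟫_ℝ = -⟪x, T y⟫_ℝ) (hdim : 2 ≤ Module.finrank ℝ V) :
    ∃ (v w : V) (d : ℝ), IsRotationFamily T ![v] ![w] ![d] := by
  have hsymm : (T ∘ₗ T).IsSymmetric := fun x y => by
    simp only [LinearMap.comp_apply, hT, neg_neg]
  let b := hsymm.eigenvectorBasis rfl
  by_cases hzero : ∀ i, T (b i) = 0
  · refine ⟨b ⟨0, by omega⟩, b ⟨1, by omega⟩, 0, ?_⟩
    constructor <;> simp [hzero, b.orthonormal.inner_eq_zero]
  · push Not at hzero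
    obtain ⟨i, hi⟩ := hzero
    exact ⟨_, _, _, isRotationFamily_of_map_map_eq_smul hT (b.orthonormal.norm_eq_one i) hi
      (hsymm.apply_eigenvectorBasis rfl i)⟩

lemma IsRotationFamily.map_mem_span {v w : V} {d : ℝ} (h : IsRotationFamily T ![v] ![w] ![d]) :
    ∀ x ∈ Submodule.span ℝ {v, w}, T x ∈ Submodule.span ℝ {v, w} := by
  have hle : Submodule.span ℝ {v, w} ≤ (Submodule.span ℝ {v, w}).comap T := by
    rw [Submodule.span_le, Set.pair_subset_iff]
    refine ⟨?_, ?_⟩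
    · simp only [SetLike.mem_coe, Submodule.mem_comap]
      rw [show T v = d • w from h.map_left 0]
      exact Submodule.smul_mem _ _ (Submodule.mem_span_of_mem (by simp))
    · simp only [SetLike.mem_coe, Submodule.mem_comap]
      rw [show T w = -d • v from h.map_right 0]
      exact Submodule.smul_mem _ _ (Submodule.mem_span_of_mem (by simp))
  exact hle

lemma IsRotationFamily.finrank_span {v w : V} {d : ℝ} (h : IsRotationFamily T ![v] ![w] ![d]) :
    Module.finrank ℝ (Submodule.span ℝ {v, w}) = 2 := by
  have hrank := finrank_span_eq_card h.orthonormal_sumElim.linearIndependent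
  have hrange : Set.range (Sum.elim ![v] ![w]) = {v, w} := by
    rw [Set.Sum.elim_range]
    simp [Set.pair_comm]
  rw [hrange] at hrank
  simpa only [Fintype.card_sum, Fintype.card_fin] using hrank

lemma exists_isRotationFamily [FiniteDimensional ℝ V] (hT : ∀ x y, ⟪T x, y⟫_ℝ = -⟪x, T y⟫_ℝ)
    {k : ℕ} (hdim : Module.finrank ℝ V = 2 * k) :
    ∃ (v w : Fin k → V) (d : Fin k → ℝ), IsRotationFamily T v w d := by
  induction k generalizing V with
  | zero => exact ⟨0, 0, 0, by constructor <;> simp⟩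
  | succ k ih =>
    obtain ⟨v₀, w₀, d₀, h₀⟩ := exists_isRotationFamily_singleton hT (by omega)
    let P := Submodule.span ℝ {v₀, w₀}
    have hP : ∀ x ∈ Pᗮ, T x ∈ Pᗮ := map_mem_orthogonal_of_skew hT h₀.map_mem_span
    have hPdim : Module.finrank ℝ Pᗮ = 2 * k := by
      have hsum := P.finrank_add_finrank_orthogonal
      rw [h₀.finrank_span] at hsum
      omega
    obtain ⟨v, w, d, h⟩ := ih (T := T.restrict hP) (fun x y => hT x y) hPdim
    have hperp (x : Pᗮ) : ⟪v₀, (x : V)⟫_ℝ = 0 ∧ ⟪w₀, (x : V)⟫_ℝ = 0 :=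
      ⟨x.2 v₀ (Submodule.mem_span_of_mem (by simp)), x.2 w₀ (Submodule.mem_span_of_mem (by simp))⟩
    exact ⟨_, _, _, h₀.vecCons h.of_restrict (fun i => hperp (v i)) fun i => hperp (w i)⟩

lemma exists_isRotationFamily_antitone [FiniteDimensional ℝ V]
    (hT : ∀ x y, ⟪T x, y⟫_ℝ = -⟪x, T y⟫_ℝ) {k : ℕ} (hdim : Module.finrank ℝ V = 2 * k) :
    ∃ (v w : Fin k → V) (d : Fin k → ℝ), Antitone d ∧ IsRotationFamily T v w d := by
  obtain ⟨v, w, d, h⟩ := exists_isRotationFamily hT hdim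
  have hanti : Antitone (d ∘ Tuple.sort (-d)) := fun i j hij =>
    neg_le_neg_iff.mp (Tuple.monotone_sort (-d) hij)
  exact ⟨_, _, _, hanti, h.comp (Tuple.sort (-d)).injective⟩

end SkewAdjoint

section Existence

open scoped InnerProductSpace

lemma inner_toEuclideanLin_of_skew {n : Type*} [Fintype n] [DecidableEq n] {A : Matrix n n ℝ}
    (hA : Aᵀ = -A) (x y : EuclideanSpace ℝ n) :
    ⟪toEuclideanLin A x, y⟫_ℝ = -⟪x, toEuclideanLin A y⟫_ℝ := by
  rw [← LinearMap.adjoint_inner_right, ← toEuclideanLin_conjTranspose_eq_adjoint,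
    conjTranspose_eq_transpose_of_trivial, hA, map_neg, LinearMap.neg_apply, inner_neg_right]

/-- The matrix whose rows are the given vectors. -/
def rowMatrix {m n : Type*} (u : m → EuclideanSpace ℝ n) : Matrix m n ℝ :=
  of fun i => (u i).ofLp

lemma rowMatrix_mul_mul_transpose_apply {m n : Type*} [Fintype n] [DecidableEq n]
    (u : m → EuclideanSpace ℝ n) (A : Matrix n n ℝ) (p q : m) :
    (rowMatrix u * A * (rowMatrix u)ᵀ) p q = ⟪u p, toEuclideanLin A (u q)⟫_ℝ := by
  rw [EuclideanSpace.inner_eq_star_dotProduct, star_trivial, dotProduct_comm, Matrix.mul_assoc]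
  rfl

lemma rowMatrix_mem_orthogonalGroup {n : Type*} [Fintype n] [DecidableEq n]
    {u : n → EuclideanSpace ℝ n} (hu : Orthonormal ℝ u) :
    rowMatrix u ∈ orthogonalGroup n ℝ := by
  rw [mem_orthogonalGroup_iff]
  ext p q
  have h := rowMatrix_mul_mul_transpose_apply u 1 p q
  rw [Matrix.mul_one] at h
  rw [h, one_apply]
  simpa using orthonormal_iff_ite.mp hu p q

lemma IsRotationFamily.rowMatrix_conj {ι n : Type*} [DecidableEq ι] [Fintype n] [DecidableEq n]
    {A : Matrix n n ℝ} {v w : ι → EuclideanSpace ℝ n} {d : ι → ℝ}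
    (h : IsRotationFamily (toEuclideanLin A) v w d) :
    rowMatrix (Sum.elim v w) * A * (rowMatrix (Sum.elim v w))ᵀ = skewNormalForm d := by
  have hvv := orthonormal_iff_ite.mp h.orthonormal_left
  have hww := orthonormal_iff_ite.mp h.orthonormal_right
  have hwv (i j : ι) : ⟪w i, v j⟫_ℝ = 0 := (real_inner_comm _ _).trans (h.inner_eq_zero j i)
  ext (i | i) (j | j) <;> rw [rowMatrix_mul_mul_transpose_apply]
  · simp [skewNormalForm, h.map_left, inner_smul_right, h.inner_eq_zero]
  · by_cases hij : i = j <;>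
      simp [-inner_self_eq_norm_sq_to_K, skewNormalForm, h.map_right, inner_smul_right, hvv, hij]
  · by_cases hij : i = j <;>
      simp [-inner_self_eq_norm_sq_to_K, skewNormalForm, h.map_left, inner_smul_right, hww, hij]
  · simp [skewNormalForm, h.map_right, inner_smul_right, hwv]

lemma mem_specialOrthogonalGroup_of_det_pos {n R : Type*} [Fintype n] [DecidableEq n]
    [CommRing R] [LinearOrder R] [IsStrictOrderedRing R] {Q : Matrix n n R}
    (hQ : Q ∈ orthogonalGroup n R) (hdet : 0 < Q.det) : Q ∈ specialOrthogonalGroup n R := by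
  have hsq : Q.det * Q.det = 1 := by
    simpa using congrArg det ((mem_orthogonalGroup_iff _ _).mp hQ)
  have hone : Q.det = 1 :=
    (mul_self_eq_one_iff.mp hsq).resolve_right (neg_one_lt_zero.trans hdet).ne'
  exact mem_specialOrthogonalGroup_iff.mpr ⟨hQ, hone⟩

variable {k : ℕ} {A : Matrix (Fin k ⊕ Fin k) (Fin k ⊕ Fin k) ℝ}

lemma exists_orthogonal_conj_eq_skewNormalForm (hA : Aᵀ = -A) :
    ∃ Q ∈ orthogonalGroup (Fin k ⊕ Fin k) ℝ, ∃ d : Fin k → ℝ,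
      (∀ i, 0 ≤ d i) ∧ Antitone d ∧ Q * A * Qᵀ = skewNormalForm d := by
  obtain ⟨v, w, d, hd, h⟩ := exists_isRotationFamily_antitone (k := k)
    (inner_toEuclideanLin_of_skew hA) (by simp [two_mul])
  exact ⟨_, rowMatrix_mem_orthogonalGroup h.orthonormal_sumElim, d, h.nonneg, hd, h.rowMatrix_conj⟩

lemma evenNormalForm_mul_of_nonneg_of_antitone {d e : Fin k → ℝ} (hd : ∀ i, 0 ≤ d i)
    (hanti : Antitone d) (he : e * e = 1) (he_lt : ∀ i j, i < j → e i = 1) :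
    EvenNormalForm (e * d) := by
  intro i j hij
  have habs : |e j| = 1 := (abs_eq zero_le_one).mpr (mul_self_eq_one_iff.mp (congrFun he j))
  rw [Pi.mul_apply, Pi.mul_apply, abs_mul, habs, he_lt i j hij, one_mul, one_mul,
    abs_of_nonneg (hd j)]
  exact hanti hij.le

lemma exists_sign_correction [NeZero k] {δ : ℝ} (hδ : δ ≠ 0) :
    ∃ e : Fin k → ℝ, e * e = 1 ∧ (∀ i j, i < j → e i = 1) ∧ 0 < (∏ i, e i) * δ := by
  rcases lt_or_gt_of_ne hδ with hneg | hpos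
  · refine ⟨Function.update 1 ⊤ (-1), ?_, fun i j hij => ?_, ?_⟩
    · ext i
      by_cases hi : i = ⊤ <;> simp [hi]
    · exact Function.update_of_ne hij.ne_top _ _
    · simpa [Finset.prod_update_of_mem] using hneg
  · exact ⟨1, one_mul 1, fun _ _ _ => rfl, by simpa using hpos⟩

lemma exists_specialOrthogonal_conj_eq_skewNormalForm [NeZero k] (hA : Aᵀ = -A) :
    ∃ Q ∈ specialOrthogonalGroup (Fin k ⊕ Fin k) ℝ, ∃ lam : Fin k → ℝ,
      EvenNormalForm lam ∧ Q * A * Qᵀ = skewNormalForm lam := by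
  obtain ⟨Q, hQ, d, hd, hanti, hconj⟩ := exists_orthogonal_conj_eq_skewNormalForm hA
  have hdet : Q.det ≠ 0 := det_ne_zero_of_right_inverse ((mem_orthogonalGroup_iff _ _).mp hQ)
  obtain ⟨e, he, he_lt, hpos⟩ := exists_sign_correction (k := k) hdet
  refine ⟨halfScaling e * Q, ?_, e * d,
    evenNormalForm_mul_of_nonneg_of_antitone hd hanti he he_lt, ?_⟩
  · apply mem_specialOrthogonalGroup_of_det_pos
      (mul_mem (halfScaling_mem_orthogonalGroup he) hQ)
    rwa [det_mul, det_halfScaling]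
  · rw [← halfScaling_mul_skewNormalForm_mul_transpose, ← hconj, transpose_mul]
    simp only [Matrix.mul_assoc]

end Existence

section Interleaving

/-- The bijection splitting `{0, …, 2k - 1}` by parity, with `2i + 1 ↦ inl i` and `2i ↦ inr i`:
it matches the interleaved basis of `Hmat` with the one of `skewNormalForm`. -/
def parityEquiv (k : ℕ) : Fin (2 * k) ≃ Fin k ⊕ Fin k where
  toFun i := if (i : ℕ) % 2 = 0 then .inr ⟨i / 2, by omega⟩ else .inl ⟨i / 2, by omega⟩
  invFun := Sum.elim (fun i => ⟨2 * i + 1, by omega⟩) fun i => ⟨2 * i, by omega⟩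
  left_inv i := by
    by_cases hi : (i : ℕ) % 2 = 0 <;> simp [hi, Fin.ext_iff] <;> omega
  right_inv := by
    rintro (i | i) <;> simp [Nat.add_mod, Fin.ext_iff]; omega

lemma Hmat_eq_submatrix_skewNormalForm {k : ℕ} (lam : Fin k → ℝ) :
    Hmat (2 * k) k lam = (skewNormalForm lam).submatrix (parityEquiv k) (parityEquiv k) := by
  apply (Matrix.reindex (parityEquiv k) (parityEquiv k)).injective
  ext (i | i) (j | j) <;> by_cases hij : i = j <;>
    simp [parityEquiv, Hmat, skewNormalForm, hij, Nat.mul_add_div, Fin.val_ne_of_ne, Ne.symm,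
      Nat.two_mul_ne_two_mul_add_one]

lemma Hmat_transpose {k : ℕ} (lam : Fin k → ℝ) :
    (Hmat (2 * k) k lam)ᵀ = -Hmat (2 * k) k lam := by
  rw [Hmat_eq_submatrix_skewNormalForm, transpose_submatrix, skewNormalForm_transpose]
  rfl

lemma submatrix_equiv_mem_specialOrthogonalGroup {m n R : Type*} [Fintype m] [DecidableEq m]
    [Fintype n] [DecidableEq n] [CommRing R] (f : m ≃ n) {Q : Matrix n n R}
    (hQ : Q ∈ specialOrthogonalGroup n R) :
    Q.submatrix f f ∈ specialOrthogonalGroup m R := by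
  obtain ⟨horth, hdet⟩ := mem_specialOrthogonalGroup_iff.mp hQ
  rw [mem_specialOrthogonalGroup_iff, mem_orthogonalGroup_iff, transpose_submatrix,
    submatrix_mul_equiv, (mem_orthogonalGroup_iff _ _).mp horth, submatrix_one_equiv,
    det_submatrix_equiv_self]
  exact ⟨rfl, hdet⟩

lemma conj_submatrix_equiv {m n R : Type*} [Fintype m] [Fintype n] [CommRing R] (f : m ≃ n)
    (Q A : Matrix n n R) :
    Q.submatrix f f * A.submatrix f f * (Q.submatrix f f)ᵀ = (Q * A * Qᵀ).submatrix f f := by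
  rw [transpose_submatrix, submatrix_mul_equiv, submatrix_mul_equiv]

lemma exists_specialOrthogonal_conj_eq_Hmat {k : ℕ} [NeZero k]
    {A : Matrix (Fin (2 * k)) (Fin (2 * k)) ℝ} (hA : Aᵀ = -A) :
    ∃ Q ∈ specialOrthogonalGroup (Fin (2 * k)) ℝ, ∃ lam : Fin k → ℝ,
      EvenNormalForm lam ∧ Q * A * Qᵀ = Hmat (2 * k) k lam := by
  let f := parityEquiv k
  obtain ⟨Q, hQ, lam, hlam, hconj⟩ := exists_specialOrthogonal_conj_eq_skewNormalForm
    (A := A.submatrix f.symm f.symm) (by rw [transpose_submatrix, hA]; rfl)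
  refine ⟨Q.submatrix f f, submatrix_equiv_mem_specialOrthogonalGroup f hQ, lam, hlam, ?_⟩
  rw [Hmat_eq_submatrix_skewNormalForm, ← hconj, ← conj_submatrix_equiv, submatrix_submatrix,
    f.symm_comp_self, submatrix_id_id]

lemma EvenNormalForm.eq_of_conj_Hmat {k : ℕ} {lam lam' : Fin k → ℝ} (h : EvenNormalForm lam)
    (h' : EvenNormalForm lam') {Q : Matrix (Fin (2 * k)) (Fin (2 * k)) ℝ}
    (hQ : Q ∈ specialOrthogonalGroup (Fin (2 * k)) ℝ)
    (hconj : Hmat (2 * k) k lam' = Q * Hmat (2 * k) k lam * Qᵀ) : lam = lam' := by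
  let f := parityEquiv k
  apply h.eq_of_conj h' (submatrix_equiv_mem_specialOrthogonalGroup f.symm hQ)
  rw [Hmat_eq_submatrix_skewNormalForm, Hmat_eq_submatrix_skewNormalForm] at hconj
  have hsub := congrArg (fun M => M.submatrix f.symm f.symm) hconj
  simpa [f, ← conj_submatrix_equiv] using hsub

end Interleaving

section SkewAdjointPart

variable {A : Type*} [Ring A] [StarRing A] (R : Type*) [CommRing R] [Invertible (2 : R)]
  [StarRing R] [TrivialStar R] [Algebra R A] [StarModule R A]

lemma coe_skewAdjointPart_conj (q b : A) :
    (skewAdjointPart R (q * b * star q) : A) = q * skewAdjointPart R b * star q := by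
  simp only [skewAdjointPart_apply_coe, star_mul, star_star, mul_smul_comm, smul_mul_assoc,
    mul_sub, sub_mul, mul_assoc]

lemma isSelfAdjoint_sub_iff_coe_skewAdjointPart_eq {b h : A} (hh : h ∈ skewAdjoint A) :
    IsSelfAdjoint (h - b) ↔ (skewAdjointPart R b : A) = h := by
  have hpart : (skewAdjointPart R h : A) = h :=
    congrArg Subtype.val
      (LinearMap.congr_fun (skewAdjointPart_comp_subtype_skewAdjoint R) ⟨h, hh⟩)
  constructor
  · intro hsub
    have hzero := congrArg Subtype.val (hsub.skewAdjointPart_apply R)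
    rw [map_sub, AddSubgroup.coe_sub, hpart] at hzero
    exact (sub_eq_zero.mp hzero).symm
  · intro heq
    have hsum := StarModule.selfAdjointPart_add_skewAdjointPart R b
    rw [heq] at hsum
    rw [← hsum, sub_add_cancel_right]
    exact (selfAdjointPart R b).2.neg

end SkewAdjointPart

section CoadjointAction

lemma coadjAct_eq_one_iff {n : ℕ} {x g c a H : Matrix (Fin n) (Fin n) ℝ} (hg : IsUnit g.det) :
    coadjAct x g c a = (1, H) ↔ gᵀ * g = c ∧ x = H - g * a * g⁻¹ := by
  have hgT : IsUnit gᵀ.det := by rwa [det_transpose]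
  have hfst : (gᵀ)⁻¹ * c * g⁻¹ = 1 ↔ gᵀ * g = c := by
    constructor
    · intro h
      calc gᵀ * g = gᵀ * ((gᵀ)⁻¹ * c * g⁻¹) * g := by rw [h, Matrix.mul_one]
        _ = c := by
            rw [Matrix.mul_assoc (gᵀ)⁻¹, mul_nonsing_inv_cancel_left _ _ hgT,
              nonsing_inv_mul_cancel_right _ _ hg]
    · rintro rfl
      rw [nonsing_inv_mul_cancel_left _ _ hgT, mul_nonsing_inv _ hg]
  rw [coadjAct, Prod.mk.injEq, ← hfst]
  refine and_congr_right fun h => ?_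
  rw [h, Matrix.mul_one, eq_sub_iff_add_eq']

lemma exists_coadjAct_eq_one_iff {n : ℕ} {g c a H : Matrix (Fin n) (Fin n) ℝ} (hH : Hᵀ = -H)
    (hg : IsUnit g.det) :
    (∃ x : Matrix (Fin n) (Fin n) ℝ, x.IsSymm ∧ coadjAct x g c a = (1, H)) ↔
      gᵀ * g = c ∧ (skewAdjointPart ℝ (g * a * g⁻¹) : Matrix (Fin n) (Fin n) ℝ) = H := by
  have hmem : H ∈ skewAdjoint (Matrix (Fin n) (Fin n) ℝ) := by
    rwa [skewAdjoint.mem_iff, star_eq_conjTranspose, conjTranspose_eq_transpose_of_trivial]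
  rw [← isSelfAdjoint_sub_iff_coe_skewAdjointPart_eq ℝ hmem, IsSelfAdjoint, star_eq_conjTranspose,
    conjTranspose_eq_transpose_of_trivial]
  simp only [coadjAct_eq_one_iff hg]
  constructor
  · rintro ⟨x, hx, hc, rfl⟩
    exact ⟨hc, hx⟩
  · rintro ⟨hc, hx⟩
    exact ⟨_, hx, hc, rfl⟩

lemma coe_skewAdjointPart_orthogonal_mul_conj {n : Type*} [Fintype n] [DecidableEq n]
    {Q : Matrix n n ℝ} (hQ : Q ∈ orthogonalGroup n ℝ) (g a : Matrix n n ℝ) :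
    (skewAdjointPart ℝ (Q * g * a * (Q * g)⁻¹) : Matrix n n ℝ) =
      Q * skewAdjointPart ℝ (g * a * g⁻¹) * Qᵀ := by
  have hinv : Q⁻¹ = star Q := inv_eq_right_inv ((mem_orthogonalGroup_iff _ _).mp hQ)
  have hconj : Q * g * a * (Q * g)⁻¹ = Q * (g * a * g⁻¹) * star Q := by
    rw [Matrix.mul_inv_rev, hinv]
    simp only [Matrix.mul_assoc]
  rw [hconj, coe_skewAdjointPart_conj]
  rfl

lemma mul_nonsing_inv_mem_specialOrthogonalGroup {n K : Type*} [Fintype n] [DecidableEq n]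
    [Field K] [LinearOrder K] [IsStrictOrderedRing K] {g g' : Matrix n n K} (hg : 0 < g.det)
    (hg' : 0 < g'.det) (h : gᵀ * g = g'ᵀ * g') :
    g' * g⁻¹ ∈ specialOrthogonalGroup n K := by
  apply mem_specialOrthogonalGroup_of_det_pos
  · rw [mem_orthogonalGroup_iff']
    calc (g' * g⁻¹)ᵀ * (g' * g⁻¹) = (g⁻¹)ᵀ * (g'ᵀ * g') * g⁻¹ := by
          simp only [transpose_mul, Matrix.mul_assoc]
      _ = (g * g⁻¹)ᵀ * (g * g⁻¹) := by
          rw [← h, transpose_mul]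
          simp only [Matrix.mul_assoc]
      _ = 1 := by rw [mul_nonsing_inv _ hg.ne'.isUnit, transpose_one, Matrix.one_mul]
  · rw [det_mul, det_nonsing_inv, Ring.inverse_eq_inv']
    positivity

open scoped MatrixOrder Matrix.Norms.L2Operator in
lemma exists_transpose_mul_self_eq_of_posDef {n : Type*} [Fintype n] [DecidableEq n]
    {c : Matrix n n ℝ} (hc : c.PosDef) : ∃ B : Matrix n n ℝ, 0 < B.det ∧ Bᵀ * B = c := by
  have hB : (CFC.sqrt c).PosDef := hc.isStrictlyPositive.sqrt.posDef
  refine ⟨CFC.sqrt c, hB.det_pos, ?_⟩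
  rw [← conjTranspose_eq_transpose_of_trivial, hB.isHermitian.eq]
  exact CFC.sqrt_mul_sqrt_self c hc.posSemidef.nonneg

lemma exists_coadjAct_eq_Hmat {k : ℕ} [NeZero k]
    {c : Matrix (Fin (2 * k)) (Fin (2 * k)) ℝ} (hc : c.PosDef)
    (a : Matrix (Fin (2 * k)) (Fin (2 * k)) ℝ) :
    ∃ (x g : Matrix (Fin (2 * k)) (Fin (2 * k)) ℝ) (lam : Fin k → ℝ),
      x.IsSymm ∧ 0 < g.det ∧ EvenNormalForm lam ∧ coadjAct x g c a = (1, Hmat (2 * k) k lam) := by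
  obtain ⟨B, hB, hBc⟩ := exists_transpose_mul_self_eq_of_posDef hc
  let A : Matrix (Fin (2 * k)) (Fin (2 * k)) ℝ := skewAdjointPart ℝ (B * a * B⁻¹)
  have hA : Aᵀ = -A := (skewAdjointPart ℝ (B * a * B⁻¹)).2
  obtain ⟨Q, hQ, lam, hlam, hconj⟩ := exists_specialOrthogonal_conj_eq_Hmat hA
  obtain ⟨horth, hdet⟩ := mem_specialOrthogonalGroup_iff.mp hQ
  have hg : 0 < (Q * B).det := by rwa [det_mul, hdet, one_mul]
  have hgram : (Q * B)ᵀ * (Q * B) = c := by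
    calc (Q * B)ᵀ * (Q * B) = Bᵀ * (Qᵀ * Q) * B := by
          simp only [transpose_mul, Matrix.mul_assoc]
      _ = c := by rw [(mem_orthogonalGroup_iff' _ _).mp horth, Matrix.mul_one, hBc]
  obtain ⟨x, hx, h⟩ := (exists_coadjAct_eq_one_iff (Hmat_transpose lam) hg.ne'.isUnit).mpr
    ⟨hgram, (coe_skewAdjointPart_orthogonal_mul_conj horth B a).trans hconj⟩
  exact ⟨x, Q * B, lam, hx, hg, hlam, h⟩

lemma EvenNormalForm.eq_of_coadjAct_eq {k : ℕ} {c a : Matrix (Fin (2 * k)) (Fin (2 * k)) ℝ}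
    {lam lam' : Fin k → ℝ} (hlam : EvenNormalForm lam) (hlam' : EvenNormalForm lam')
    {g g' : Matrix (Fin (2 * k)) (Fin (2 * k)) ℝ} (hg : 0 < g.det) (hg' : 0 < g'.det)
    (h : ∃ x, x.IsSymm ∧ coadjAct x g c a = (1, Hmat (2 * k) k lam))
    (h' : ∃ x, x.IsSymm ∧ coadjAct x g' c a = (1, Hmat (2 * k) k lam')) : lam = lam' := by
  obtain ⟨hc, hpart⟩ := (exists_coadjAct_eq_one_iff (Hmat_transpose lam) hg.ne'.isUnit).mp h
  obtain ⟨hc', hpart'⟩ := (exists_coadjAct_eq_one_iff (Hmat_transpose lam') hg'.ne'.isUnit).mp h'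
  have hQ := mul_nonsing_inv_mem_specialOrthogonalGroup hg hg' (hc.trans hc'.symm)
  have hg'_eq : g' = g' * g⁻¹ * g := (nonsing_inv_mul_cancel_right g g' hg.ne'.isUnit).symm
  apply hlam.eq_of_conj_Hmat hlam' hQ
  rw [← hpart', ← hpart, ← coe_skewAdjointPart_orthogonal_mul_conj
    (mem_specialOrthogonalGroup_iff.mp hQ).1, ← hg'_eq]

end CoadjointAction

theorem orbit_normal_form_even (k : ℕ) (hk : 1 ≤ k)
    (c a : Matrix (Fin (2 * k)) (Fin (2 * k)) ℝ) (hc : c.PosDef) :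
    (∃ (x g : Matrix (Fin (2 * k)) (Fin (2 * k)) ℝ) (lam : Fin k → ℝ),
      x.IsSymm ∧ 0 < g.det ∧ EvenNormalForm lam ∧
      coadjAct x g c a = (1, Hmat (2 * k) k lam)) ∧
    (∀ lam lam' : Fin k → ℝ,
      EvenNormalForm lam → EvenNormalForm lam' →
      (∃ x g : Matrix (Fin (2 * k)) (Fin (2 * k)) ℝ,
        x.IsSymm ∧ 0 < g.det ∧ coadjAct x g c a = (1, Hmat (2 * k) k lam)) →
      (∃ x g : Matrix (Fin (2 * k)) (Fin (2 * k)) ℝ,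
        x.IsSymm ∧ 0 < g.det ∧ coadjAct x g c a = (1, Hmat (2 * k) k lam')) →
      lam = lam') := by
  have : NeZero k := ⟨by omega⟩
  refine ⟨exists_coadjAct_eq_Hmat hc a, ?_⟩
  rintro lam lam' hlam hlam' ⟨x, g, hx, hg, h⟩ ⟨x', g', hx', hg', h'⟩
  exact hlam.eq_of_coadjAct_eq hlam' hg hg' ⟨x, hx, h⟩ ⟨x', hx', h'⟩
end
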